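/- arXiv:2604.02653 — 2 statements merged into one kernel-verified Lean document; each statement's English description precedes it below -/
import Mathlib

section
/- Let l : ℝ → ℝ be five times continuously differentiable with a local minimum at z* satisfying l''(z*) > 0 and α_l(z*) = 3(l'''(z*))² − l''''(z*)·l''(z*) > 0. Then there exist σ > 0 and τ > 0 such that for every learning rate η ∈ (2/l''(z*), (2+τ)/l''(z*)], there exist points z_η⁻ < z* < z_η⁺ such that, for the gradient descent iterates a_{t+1} = a_t − η·l'(a_t) with any initialization a₀ satisfying 0 < |a₀ − z*| ≤ σ, one of the two subsequences (a_{2t})_{t≥0} and (a_{2t+1})_{t≥0} converges to z_η⁻ and the other converges to z_η⁺. -/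
open Filter Topology

/-!
Write `g = l'` (recentred so that the minimum is at `0`), `f x = x - η g x`, and let `F = f ∘ f`.
At the critical step size `η₀ = 2 / l''` one has `f' 0 = -1`, hence `F' 0 = 1`, `F'' 0 = 0`, and
`F''' 0 = -2 f''' 0 - 3 (f'' 0)² = -(4 / l''²) (3 l'''² - l'''' l'')`. Product-stability therefore
says exactly that `F''' < 0` at `(η₀, 0)`, so by continuity also for all `(η, x)` near `(η₀, 0)`;
this is the supercritical period-doubling bifurcation.

For `η` slightly larger than `η₀` put `G = F - id`. Then `G 0 = 0`, `G' 0 > 0`, and `G'` is strictly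
concave. This makes `G x / x²` strictly decreasing for `x > 0` (`ratio_anti`), so `G` has at most
one positive zero and passes there from positive to negative. A zero exists below a fixed radius
`s` because at `η₀` the sign of `F'''` gives `G s < 0` (`lt_self_of_third_deriv_neg`), which
persists for nearby `η`. As `F` is increasing, its orbits started in `(0, s]` converge monotonically
to that fixed point `p` (`tendsto_of_attracting`, `half_line`). Conjugating by `x ↦ -x` gives a
fixed point `q` on the negative side. Finally `f p` is a negative fixed point of `F`, so it is `q`
by uniqueness; the even iterates converge to one of `p`, `q`, the odd ones to the other.
-/

/-- If `G 0 = 0`, `G' 0 ≥ 0` and `G''' < 0`, then `G x / x ^ 2` is strictly decreasing on `(0, r]`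
(stated without division). -/
lemma ratio_anti {G G1 G2 G3 : ℝ → ℝ} {r : ℝ}
    (h0 : ∀ x, HasDerivAt G (G1 x) x) (h1 : ∀ x, HasDerivAt G1 (G2 x) x)
    (h2 : ∀ x, HasDerivAt G2 (G3 x) x) (hG : G 0 = 0) (hG1 : 0 ≤ G1 0)
    (hG3 : ∀ x, 0 ≤ x → x ≤ r → G3 x < 0) {x y : ℝ} (hx : 0 < x) (hxy : x < y) (hy : y ≤ r) :
    x ^ 2 * G y < y ^ 2 * G x := by
  have hc1 : Continuous G1 := continuous_iff_continuousAt.2 fun x => (h1 x).continuousAt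
  have hconc : StrictConcaveOn ℝ (Set.Icc 0 r) G1 := by
    apply strictConcaveOn_of_deriv2_neg (convex_Icc 0 r) hc1.continuousOn
    intro z hz
    rw [interior_Icc] at hz
    have e1 : deriv G1 = G2 := funext fun x => (h1 x).deriv
    simp only [Function.iterate_succ, Function.iterate_zero, Function.comp, id, e1, (h2 z).deriv]
    exact hG3 z hz.1.le hz.2.le
  have hy0 : 0 < y := hx.trans hxy
  -- With `c = x / y`, concavity gives `G' (c t) > c G' t`; integrate this over `t ∈ [0, y]`.
  set c := x / y with hc
  have hc0 : 0 < c := div_pos hx hy0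
  have hc1' : c < 1 := (div_lt_one hy0).2 hxy
  have hcy : c * y = x := div_mul_cancel₀ x hy0.ne'
  have hK : ∀ t, HasDerivAt (fun t => G (c * t) - c ^ 2 * G t)
      (G1 (c * t) * c - c ^ 2 * G1 t) t := by
    intro t
    have : HasDerivAt (fun t => G (c * t)) (G1 (c * t) * c) t :=
      ((h0 (c * t)).comp t ((hasDerivAt_id t).const_mul c)).congr_deriv (by simp)
    exact this.sub ((h0 t).const_mul (c ^ 2))
  have hmono : StrictMonoOn (fun t => G (c * t) - c ^ 2 * G t) (Set.Icc 0 y) := by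
    apply strictMonoOn_of_deriv_pos (convex_Icc 0 y)
    · exact fun t _ => (hK t).continuousAt.continuousWithinAt
    · intro t ht
      rw [interior_Icc] at ht
      rw [(hK t).deriv]
      have := hconc.2 ⟨ht.1.le, ht.2.le.trans hy⟩ ⟨le_rfl, hy0.le.trans hy⟩
        ht.1.ne' hc0 (sub_pos.2 hc1') (add_sub_cancel c 1)
      simp only [smul_eq_mul, mul_zero, add_zero] at this
      have h3 : 0 ≤ (1 - c) * G1 0 := mul_nonneg (by linarith) hG1
      nlinarith
  have := hmono ⟨le_rfl, hy0.le⟩ ⟨hy0.le, le_rfl⟩ hy0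
  simp only [mul_zero, hG, sub_zero, hcy] at this
  have h5 : y ^ 2 * (c ^ 2 * G y) < y ^ 2 * G x :=
    mul_lt_mul_of_pos_left (by linarith) (by positivity)
  calc x ^ 2 * G y = y ^ 2 * (c ^ 2 * G y) := by rw [← hcy]; ring
    _ < _ := h5

/-- At the critical step size: `F' 0 = 1`, `F'' 0 = 0` and `F''' < 0` force `F x < x` for
`x > 0`. -/
lemma lt_self_of_third_deriv_neg {F F1 F2 F3 : ℝ → ℝ} {r : ℝ}
    (h0 : ∀ x, HasDerivAt F (F1 x) x) (h1 : ∀ x, HasDerivAt F1 (F2 x) x)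
    (h2 : ∀ x, HasDerivAt F2 (F3 x) x) (hF : F 0 = 0) (hF1 : F1 0 = 1) (hF2 : F2 0 = 0)
    (hF3 : ∀ x, 0 ≤ x → x ≤ r → F3 x < 0) {x : ℝ} (hx : 0 < x) (hxr : x ≤ r) : F x < x := by
  have key : ∀ H H1 : ℝ → ℝ, (∀ x, HasDerivAt H (H1 x) x) → H 0 = 0 →
      (∀ x, 0 < x → x ≤ r → H1 x < 0) → ∀ x, 0 < x → x ≤ r → H x < 0 := by
    intro H H1 hd h00 hneg x hx hxr
    have : StrictAntiOn H (Set.Icc 0 x) := by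
      apply strictAntiOn_of_deriv_neg (convex_Icc 0 x)
      · exact fun t _ => (hd t).continuousAt.continuousWithinAt
      · intro t ht
        rw [interior_Icc] at ht
        rw [(hd t).deriv]
        exact hneg t ht.1 (ht.2.le.trans hxr)
    simpa [h00] using this ⟨le_rfl, hx.le⟩ ⟨hx.le, le_rfl⟩ hx
  have k2 := key F2 F3 h2 hF2 fun x hx hxr => hF3 x hx.le hxr
  have k1 := key (fun x => F1 x - 1) F2 (fun x => (h1 x).sub_const 1) (by simp [hF1]) k2
  have k0 := key (fun x => F x - x) (fun x => F1 x - 1)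
    (fun x => (h0 x).sub (hasDerivAt_id x)) (by simp [hF]) k1
  linarith [k0 x hx hxr]

lemma tendsto_of_attracting {F : ℝ → ℝ} {s p : ℝ} (hc : Continuous F)
    (hm : StrictMonoOn F (Set.Icc 0 s)) (hp : 0 < p) (hps : p < s)
    (hfix : F p = p) (hlo : ∀ x, 0 < x → x < p → x < F x) (hhi : ∀ x, p < x → x ≤ s → F x < x)
    {b : ℕ → ℝ} (hb : ∀ n, b (n + 1) = F (b n)) (hb0 : 0 < b 0) (hbs : b 0 ≤ s) :
    Tendsto b atTop (𝓝 p) := by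
  have fixlim : ∀ L, Tendsto b atTop (𝓝 L) → F L = L := by
    intro L hL
    have h1 : Tendsto (fun n => b (n + 1)) atTop (𝓝 L) := (tendsto_add_atTop_iff_nat 1).2 hL
    simp only [hb] at h1
    exact tendsto_nhds_unique ((hc.tendsto L).comp hL) h1
  rcases le_or_gt (b 0) p with h | h
  · have hin : ∀ n, 0 < b n ∧ b n ≤ p := by
      intro n
      induction n with
      | zero => exact ⟨hb0, h⟩
      | succ n ih =>
        rw [hb]
        rcases ih.2.lt_or_eq with hlt | heq
        · refine ⟨ih.1.trans (hlo _ ih.1 hlt), ?_⟩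
          rw [← hfix]
          exact (hm ⟨ih.1.le, ih.2.trans hps.le⟩ ⟨hp.le, hps.le⟩ hlt).le
        · rw [heq, hfix]; exact ⟨hp, le_rfl⟩
    have hmono : Monotone b := monotone_nat_of_le_succ fun n => by
      rw [hb]
      rcases (hin n).2.lt_or_eq with hlt | heq
      · exact (hlo _ (hin n).1 hlt).le
      · rw [heq, hfix]
    have hL := tendsto_atTop_ciSup hmono ⟨p, by rintro _ ⟨n, rfl⟩; exact (hin n).2⟩
    set L := ⨆ n, b n
    have hL0 : b 0 ≤ L := hmono.ge_of_tendsto hL 0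
    have hLp : L ≤ p := le_of_tendsto' hL fun n => (hin n).2
    have hF := fixlim L hL
    rcases hLp.lt_or_eq with hlt | heq
    · linarith [hlo L (hb0.trans_le hL0) hlt]
    · rwa [heq] at hL
  · have hin : ∀ n, p < b n ∧ b n ≤ s := by
      intro n
      induction n with
      | zero => exact ⟨h, hbs⟩
      | succ n ih =>
        rw [hb]
        refine ⟨?_, (hhi _ ih.1 ih.2).le.trans ih.2⟩
        have := hm ⟨hp.le, hps.le⟩ ⟨(hp.trans ih.1).le, ih.2⟩ ih.1
        rwa [hfix] at this
    have hanti : Antitone b := antitone_nat_of_succ_le fun n => by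
      rw [hb]; exact (hhi _ (hin n).1 (hin n).2).le
    have hL := tendsto_atTop_ciInf hanti ⟨p, by rintro _ ⟨n, rfl⟩; exact (hin n).1.le⟩
    set L := ⨅ n, b n
    have hL0 : L ≤ b 0 := hanti.le_of_tendsto hL 0
    have hLp : p ≤ L := ge_of_tendsto' hL fun n => (hin n).1.le
    have hF := fixlim L hL
    rcases hLp.lt_or_eq with hlt | heq
    · linarith [hhi L hlt (hL0.trans hbs)]
    · rwa [← heq] at hL

/-- The dynamics of an increasing map with `F 0 = 0`, `F' 0 > 1`, `F''' < 0` on `[0, r]` and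
`F s < s`: a single positive fixed point, attracting all of `(0, s]`. Uniqueness is asserted on
the larger interval `(0, r]`. -/
lemma half_line {F F1 F2 F3 : ℝ → ℝ} {r s : ℝ} (hs : 0 < s) (hsr : s < r)
    (h0 : ∀ x, HasDerivAt F (F1 x) x) (h1 : ∀ x, HasDerivAt F1 (F2 x) x)
    (h2 : ∀ x, HasDerivAt F2 (F3 x) x) (hF : F 0 = 0) (hF1 : 1 < F1 0)
    (hpos : ∀ x, 0 ≤ x → x ≤ r → 0 < F1 x)
    (hF3 : ∀ x, 0 ≤ x → x ≤ r → F3 x < 0) (hFs : F s < s) :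
    ∃ p, 0 < p ∧ p < s ∧ F p = p ∧ (∀ x, 0 < x → x ≤ r → F x = x → x = p) ∧
      ∀ b : ℕ → ℝ, (∀ n, b (n + 1) = F (b n)) → 0 < b 0 → b 0 ≤ s → Tendsto b atTop (𝓝 p) := by
  have hc : Continuous F := continuous_iff_continuousAt.2 fun x => (h0 x).continuousAt
  have hra : ∀ {x y : ℝ}, 0 < x → x < y → y ≤ r → x ^ 2 * (F y - y) < y ^ 2 * (F x - x) :=
    fun hx hxy hy => ratio_anti (G := fun x => F x - x) (G1 := fun x => F1 x - 1)
      (fun x => (h0 x).sub (hasDerivAt_id x)) (fun x => (h1 x).sub_const 1) h2 (by simp [hF])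
      (by linarith) hF3 hx hxy hy
  obtain ⟨u, hu0, hus, hFu⟩ : ∃ u, 0 < u ∧ u < s ∧ u < F u := by
    have ht := (h0 0).tendsto_slope
    have hev : ∀ᶠ x in 𝓝[>] (0 : ℝ), 1 < slope F 0 x :=
      (ht.mono_left (nhdsWithin_mono _ (by intro x hx; exact ne_of_gt hx))).eventually_const_lt hF1
    have hev2 : ∀ᶠ x in 𝓝[>] (0 : ℝ), x ∈ Set.Ioo 0 s := Ioo_mem_nhdsGT hs
    obtain ⟨u, h1, h2⟩ := (hev.and hev2).exists
    refine ⟨u, h2.1, h2.2, ?_⟩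
    rw [slope_def_field, hF, sub_zero, sub_zero, lt_div_iff₀ h2.1] at h1
    linarith
  obtain ⟨p, hp, hpz⟩ : (0 : ℝ) ∈ (fun x => F x - x) '' Set.Icc u s :=
    intermediate_value_Icc' hus.le (hc.sub continuous_id).continuousOn
      ⟨sub_nonpos.2 hFs.le, sub_nonneg.2 hFu.le⟩
  have hp0 : 0 < p := hu0.trans_le hp.1
  have hfix : F p = p := by simp only at hpz; linarith
  have hps : p < s := lt_of_le_of_ne hp.2 (by rintro rfl; linarith)
  have hlo : ∀ x, 0 < x → x < p → x < F x := by
    intro x hx hxp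
    have := hra hx hxp (hps.trans hsr).le
    rw [hfix, sub_self, mul_zero] at this
    have := pos_of_mul_pos_right this (sq_nonneg p)
    linarith
  have hhi : ∀ x, p < x → x ≤ r → F x < x := by
    intro x hpx hxr
    have := hra hp0 hpx hxr
    rw [hfix, sub_self, mul_zero] at this
    have := neg_of_mul_neg_right this (sq_nonneg p)
    linarith
  have hm : StrictMonoOn F (Set.Icc 0 s) := by
    apply strictMonoOn_of_deriv_pos (convex_Icc 0 s) hc.continuousOn
    intro t ht
    rw [interior_Icc] at ht
    rw [(h0 t).deriv]
    exact hpos t ht.1.le (ht.2.trans hsr).le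
  refine ⟨p, hp0, hps, hfix, ?_, ?_⟩
  · intro x hx hxr hFx
    rcases lt_trichotomy x p with h | h | h
    · linarith [hlo x hx h]
    · exact h
    · linarith [hhi x h hxr]
  · intro b hb hb0 hbs
    exact tendsto_of_attracting hc hm hp0 hps hfix hlo (fun x h h' => hhi x h (h'.trans hsr.le))
      hb hb0 hbs

/-- The result for a critical point at `0`, with the derivatives `g, g1, g2, g3` of the loss given
as functions. -/
lemma gd_two_step_core {g g1 g2 g3 : ℝ → ℝ}
    (h0 : ∀ x, HasDerivAt g (g1 x) x) (h1 : ∀ x, HasDerivAt g1 (g2 x) x)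
    (h2 : ∀ x, HasDerivAt g2 (g3 x) x) (hc3 : Continuous g3) (hg : g 0 = 0) (hA : 0 < g1 0)
    (hps : 0 < 3 * g2 0 ^ 2 - g3 0 * g1 0) :
    ∃ σ > (0 : ℝ), ∃ τ > (0 : ℝ), ∀ η : ℝ, 2 / g1 0 < η → η ≤ (2 + τ) / g1 0 →
      ∃ q p : ℝ, q < 0 ∧ 0 < p ∧ ∀ b : ℕ → ℝ, (∀ t, b (t + 1) = b t - η * g (b t)) →
        0 < |b 0| → |b 0| ≤ σ →
        ((Tendsto (fun t => b (2 * t)) atTop (𝓝 q) ∧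
            Tendsto (fun t => b (2 * t + 1)) atTop (𝓝 p)) ∨
          (Tendsto (fun t => b (2 * t)) atTop (𝓝 p) ∧
            Tendsto (fun t => b (2 * t + 1)) atTop (𝓝 q))) := by
  have hcg : Continuous g := continuous_iff_continuousAt.2 fun x => (h0 x).continuousAt
  have hc1 : Continuous g1 := continuous_iff_continuousAt.2 fun x => (h1 x).continuousAt
  have hc2 : Continuous g2 := continuous_iff_continuousAt.2 fun x => (h2 x).continuousAt
  -- `f` is the gradient step, `F` its square; the arguments are the step size and the point.
  let f : ℝ → ℝ → ℝ := fun η x => x - η * g x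
  let f1 : ℝ → ℝ → ℝ := fun η x => 1 - η * g1 x
  let f2 : ℝ → ℝ → ℝ := fun η x => -(η * g2 x)
  let f3 : ℝ → ℝ → ℝ := fun η x => -(η * g3 x)
  let F : ℝ → ℝ → ℝ := fun η x => f η (f η x)
  let F1 : ℝ → ℝ → ℝ := fun η x => f1 η (f η x) * f1 η x
  let F2 : ℝ → ℝ → ℝ := fun η x => f2 η (f η x) * f1 η x * f1 η x + f1 η (f η x) * f2 η x
  let F3 : ℝ → ℝ → ℝ := fun η x => f3 η (f η x) * f1 η x * f1 η x * f1 η x +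
    3 * (f2 η (f η x) * f1 η x * f2 η x) + f1 η (f η x) * f3 η x
  have hf0 : ∀ η x, HasDerivAt (f η) (f1 η x) x := fun η x =>
    (hasDerivAt_id x).sub ((h0 x).const_mul η)
  have hf1 : ∀ η x, HasDerivAt (f1 η) (f2 η x) x := fun η x => by
    simpa [f1, f2] using ((h1 x).const_mul η).const_sub 1
  have hf2 : ∀ η x, HasDerivAt (f2 η) (f3 η x) x := fun η x => ((h2 x).const_mul η).neg
  have hF0 : ∀ η x, HasDerivAt (F η) (F1 η x) x := fun η x => (hf0 η (f η x)).comp x (hf0 η x)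
  have hF1 : ∀ η x, HasDerivAt (F1 η) (F2 η x) x := fun η x =>
    ((hf1 η (f η x)).comp x (hf0 η x)).mul (hf1 η x)
  have hF2 : ∀ η x, HasDerivAt (F2 η) (F3 η x) x := fun η x =>
    (((((hf2 η (f η x)).comp x (hf0 η x)).mul (hf1 η x)).mul (hf1 η x)).add
      (((hf1 η (f η x)).comp x (hf0 η x)).mul (hf2 η x))).congr_deriv (by
        simp only [F3, Function.comp, Pi.mul_apply]
        ring)
  have hfz : ∀ η, f η 0 = 0 := fun η => by simp [f, hg]
  have hFz : ∀ η, F η 0 = 0 := fun η => by simp [F, hfz]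
  set A := g1 0 with hAdef
  have hη0 : 2 / A * A = 2 := div_mul_cancel₀ 2 hA.ne'
  have hf1z : f1 (2 / A) 0 = -1 := by simp only [f1, ← hAdef, hη0]; norm_num
  have hF3z : F3 (2 / A) 0 < 0 := by
    simp only [F3, hfz, hf1z]
    simp only [f2, f3]
    have e : -(2 / A * g3 0) * -1 * -1 * -1 + 3 * (-(2 / A * g2 0) * -1 * -(2 / A * g2 0)) +
        -1 * -(2 / A * g3 0) = -(4 / A ^ 2 * (3 * g2 0 ^ 2 - g3 0 * A)) := by
      field_simp
      ring
    rw [e, neg_lt_zero]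
    positivity
  obtain ⟨ε, hε, hball⟩ : ∃ ε > 0, ∀ η x, |η - 2 / A| < ε → |x| < ε →
      F3 η x < 0 ∧ f1 η x < 0 ∧ -2 < f1 η x ∧ 0 < F1 η x := by
    have c3 : Continuous fun z : ℝ × ℝ => F3 z.1 z.2 := by
      simp only [F3, f3, f2, f1, f]; fun_prop
    have cf1 : Continuous fun z : ℝ × ℝ => f1 z.1 z.2 := by simp only [f1]; fun_prop
    have c1 : Continuous fun z : ℝ × ℝ => F1 z.1 z.2 := by simp only [F1, f1, f]; fun_prop
    have e3 := (c3.tendsto (2 / A, 0)).eventually_lt_const hF3z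
    have e1 := (cf1.tendsto (2 / A, 0)).eventually_lt_const (u := 0) (by simp [hf1z])
    have e1' := (cf1.tendsto (2 / A, 0)).eventually_const_lt (u := -2) (by simp only [hf1z]; norm_num)
    have e4 := (c1.tendsto (2 / A, 0)).eventually_const_lt (u := 0) (by simp [F1, hfz, hf1z])
    obtain ⟨ε, hε, h⟩ := Metric.eventually_nhds_iff.1 (e3.and (e1.and (e1'.and e4)))
    refine ⟨ε, hε, fun η x hη hx => h (y := (η, x)) ?_⟩
    rw [Prod.dist_eq, max_lt_iff]
    exact ⟨by simpa [Real.dist_eq] using hη, by simpa [Real.dist_eq] using hx⟩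
  set r := ε / 2 with hr
  have hr0 : 0 < r := by positivity
  -- `s = r / 2` because `|f x| ≤ 2 |x|` then keeps `f p` in `[-r, r]`, where uniqueness holds.
  set s := r / 2 with hs
  have hs0 : 0 < s := by positivity
  have hsr : s < r := by linarith
  have habs : ∀ x, 0 ≤ x → x ≤ r → |x| < ε ∧ |(-x)| < ε := fun x hx hxr => by
    rw [abs_neg, abs_of_nonneg hx]; constructor <;> linarith
  -- The mirrored map `x ↦ -F (-x)` and its derivatives.
  have hn : ∀ {H H' : ℝ → ℝ}, (∀ x, HasDerivAt H (H' x) x) →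
      ∀ x, HasDerivAt (fun x => H (-x)) (-H' (-x)) x := fun hH x =>
    ((hH (-x)).comp x (hasDerivAt_neg x)).congr_deriv (by simp)
  have hM0 : ∀ η x, HasDerivAt (fun x => -F η (-x)) (F1 η (-x)) x := fun η x =>
    (hn (hF0 η) x).neg.congr_deriv (neg_neg _)
  have hM1 : ∀ η x, HasDerivAt (fun x => F1 η (-x)) (-F2 η (-x)) x := fun η => hn (hF1 η)
  have hM2 : ∀ η x, HasDerivAt (fun x => -F2 η (-x)) (F3 η (-x)) x := fun η x =>
    (hn (hF2 η) x).neg.congr_deriv (neg_neg _)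
  have hF1z : F1 (2 / A) 0 = 1 := by simp [F1, hfz, hf1z]
  have hF2z : F2 (2 / A) 0 = 0 := by simp [F2, hfz, hf1z]
  have hself : |2 / A - 2 / A| < ε := by simpa using hε
  have hcritp : F (2 / A) s < s :=
    lt_self_of_third_deriv_neg (hF0 _) (hF1 _) (hF2 _) (hFz _) hF1z hF2z
      (fun x hx hxr => (hball _ x hself (habs x hx hxr).1).1) hs0 hsr.le
  have hcritm : -F (2 / A) (-s) < s :=
    lt_self_of_third_deriv_neg (hM0 _) (hM1 _) (hM2 _) (by simp [hFz]) (by simp [hF1z])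
      (by simp [hF2z]) (fun x hx hxr => (hball _ (-x) hself (habs x hx hxr).2).1) hs0 hsr.le
  obtain ⟨δ, hδ, hnear⟩ : ∃ δ > 0, ∀ η, |η - 2 / A| < δ → F η s < s ∧ -F η (-s) < s := by
    have c1 : Continuous fun η => F η s := by simp only [F, f]; fun_prop
    have c2 : Continuous fun η => -F η (-s) := by simp only [F, f]; fun_prop
    have := ((c1.tendsto (2 / A)).eventually_lt_const hcritp).and
      ((c2.tendsto (2 / A)).eventually_lt_const hcritm)
    obtain ⟨δ, hδ, h⟩ := Metric.eventually_nhds_iff.1 this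
    exact ⟨δ, hδ, fun η hη => h (by simpa [Real.dist_eq] using hη)⟩
  refine ⟨s, hs0, A * (min ε δ / 2), by positivity, fun η hη1 hη2 => ?_⟩
  have hm : |η - 2 / A| < min ε δ := by
    have hmin : 0 < min ε δ := lt_min hε hδ
    rw [add_div, mul_div_cancel_left₀ _ hA.ne'] at hη2
    rw [abs_of_pos (by linarith)]
    linarith
  obtain ⟨hmε, hmδ⟩ := lt_min_iff.1 hm
  obtain ⟨hsp, hsm⟩ := hnear η hmδ
  have hF1gt : 1 < F1 η 0 := by
    have : 2 < η * A := (div_lt_iff₀ hA).1 hη1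
    simp only [F1, hfz, f1, ← hAdef]
    nlinarith
  obtain ⟨p, hp0, hps', hpfix, hpu, hpc⟩ := half_line hs0 hsr (hF0 η) (hF1 η) (hF2 η) (hFz η) hF1gt
    (fun x hx hxr => (hball η x hmε (habs x hx hxr).1).2.2.2)
    (fun x hx hxr => (hball η x hmε (habs x hx hxr).1).1) hsp
  obtain ⟨q, hq0, hqs, hqfix, hqu, hqc⟩ := half_line hs0 hsr (hM0 η) (hM1 η) (hM2 η)
    (by simp [hFz]) (by simpa using hF1gt)
    (fun x hx hxr => (hball η (-x) hmε (habs x hx hxr).2).2.2.2)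
    (fun x hx hxr => (hball η (-x) hmε (habs x hx hxr).2).1) hsm
  have hcf : Continuous (f η) := continuous_iff_continuousAt.2 fun x => (hf0 η x).continuousAt
  have hanti : StrictAntiOn (f η) (Set.Icc (-r) r) := by
    apply strictAntiOn_of_deriv_neg (convex_Icc _ _) hcf.continuousOn
    intro t ht
    rw [interior_Icc] at ht
    rw [(hf0 η t).deriv]
    exact (hball η t hmε (by rw [abs_lt]; constructor <;> linarith [ht.1, ht.2])).2.1
  have hmono2 : StrictMonoOn (fun x => f η x + 2 * x) (Set.Icc (-r) r) := by
    have hd : ∀ t, HasDerivAt (fun x => f η x + 2 * x) (f1 η t + 2) t := fun t =>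
      ((hf0 η t).add ((hasDerivAt_id t).const_mul 2)).congr_deriv (by simp)
    apply strictMonoOn_of_deriv_pos (convex_Icc _ _)
    · exact fun t _ => (hd t).continuousAt.continuousWithinAt
    intro t ht
    rw [interior_Icc] at ht
    rw [(hd t).deriv]
    linarith [(hball η t hmε (by rw [abs_lt]; constructor <;> linarith [ht.1, ht.2])).2.2.1]
  have h0mem : (0 : ℝ) ∈ Set.Icc (-r) r := ⟨by linarith, hr0.le⟩
  have hfp : f η p = -q := by
    have hpm : p ∈ Set.Icc (-r) r := ⟨by linarith, by linarith⟩
    have a1 := hanti h0mem hpm hp0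
    have a2 := hmono2 h0mem hpm hp0
    simp only [hfz] at a1 a2
    have := hqu (-f η p) (by linarith) (by linarith) (by
      rw [neg_neg]
      exact congrArg (fun y => -f η y) hpfix)
    linarith
  have hfq : f η (-q) = p := by
    rw [← hfp]; exact hpfix
  refine ⟨-q, p, by linarith, hp0, fun b hb hbp hbs => ?_⟩
  have hbf : ∀ t, b (t + 1) = f η (b t) := hb
  have hb2 : ∀ n, b (2 * (n + 1)) = F η (b (2 * n)) := fun n => by
    rw [show 2 * (n + 1) = 2 * n + 1 + 1 by ring, hbf, hbf]
  have hodd : ∀ L, Tendsto (fun t => b (2 * t)) atTop (𝓝 L) →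
      Tendsto (fun t => b (2 * t + 1)) atTop (𝓝 (f η L)) := fun L hL => by
    simp only [hbf]
    exact (hcf.tendsto L).comp hL
  rcases lt_or_gt_of_ne (abs_pos.1 hbp) with hneg | hpos
  · left
    rw [abs_of_neg hneg] at hbs
    have h := (hqc (fun n => -b (2 * n)) (fun n => by simp [hb2]) (by simpa using hneg)
      (by simpa using hbs)).neg
    simp only [neg_neg] at h
    refine ⟨h, ?_⟩
    have := hodd _ h
    rwa [hfq] at this
  · right
    rw [abs_of_pos hpos] at hbs
    have h := hpc (fun n => b (2 * n)) hb2 (by simpa using hpos) (by simpa using hbs)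
    refine ⟨h, ?_⟩
    have := hodd _ h
    rwa [hfp] at this

/-- Two-step convergence of gradient descent on a product-stable local minimum. -/
theorem gd_two_step_convergence
    (l : ℝ → ℝ) (zs : ℝ)
    (hl : ContDiff ℝ 5 l) (hmin : IsLocalMin l zs)
    (hl2 : 0 < iteratedDeriv 2 l zs)
    (hps : 0 < 3 * (iteratedDeriv 3 l zs) ^ 2 -
        iteratedDeriv 4 l zs * iteratedDeriv 2 l zs) :
    ∃ σ > (0 : ℝ), ∃ τ > (0 : ℝ),
      ∀ η : ℝ, 2 / iteratedDeriv 2 l zs < η → η ≤ (2 + τ) / iteratedDeriv 2 l zs →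
        ∃ zm zp : ℝ, zm < zs ∧ zs < zp ∧
          ∀ a : ℕ → ℝ, (∀ t, a (t + 1) = a t - η * deriv l (a t)) →
            0 < |a 0 - zs| → |a 0 - zs| ≤ σ →
            ((Tendsto (fun t => a (2 * t)) atTop (𝓝 zm) ∧
                Tendsto (fun t => a (2 * t + 1)) atTop (𝓝 zp)) ∨
              (Tendsto (fun t => a (2 * t)) atTop (𝓝 zp) ∧
                Tendsto (fun t => a (2 * t + 1)) atTop (𝓝 zm))) := by
  have hd : ∀ m : ℕ, m < 5 → ∀ x,
      HasDerivAt (fun x => iteratedDeriv m l (zs + x)) (iteratedDeriv (m + 1) l (zs + x)) x := by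
    intro m hm x
    have h := (hl.differentiable_iteratedDeriv m (by exact_mod_cast hm) (zs + x)).hasDerivAt
    rw [← iteratedDeriv_succ] at h
    exact h.comp_const_add zs x
  have hc : Continuous fun x => iteratedDeriv 4 l (zs + x) :=
    (hl.continuous_iteratedDeriv 4 (by norm_num)).comp (continuous_const.add continuous_id)
  obtain ⟨σ, hσ, τ, hτ, H⟩ := gd_two_step_core (hd 1 (by norm_num)) (hd 2 (by norm_num))
    (hd 3 (by norm_num)) hc (by simp [iteratedDeriv_one, hmin.deriv_eq_zero])
    (by simpa using hl2) (by simpa using hps)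
  simp only [add_zero, Nat.reduceAdd, iteratedDeriv_one] at H
  refine ⟨σ, hσ, τ, hτ, fun η h1 h2 => ?_⟩
  obtain ⟨q, p, hq, hp, K⟩ := H η h1 h2
  refine ⟨zs + q, zs + p, by linarith, by linarith, fun a ha ha0 haσ => ?_⟩
  have back : ∀ (u : ℕ → ℕ) (L : ℝ), Tendsto (fun t => a (u t) - zs) atTop (𝓝 L) →
      Tendsto (fun t => a (u t)) atTop (𝓝 (zs + L)) := fun u L h => by
    simpa using h.const_add zs
  rcases K (fun t => a t - zs) (fun t => by simp only [ha, add_sub_cancel]; ring) ha0 haσ with h | h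
  · exact Or.inl ⟨back _ _ h.1, back _ _ h.2⟩
  · exact Or.inr ⟨back _ _ h.1, back _ _ h.2⟩
end

section
/- Let l : ℝ → ℝ be five times continuously differentiable with a local minimum at z* satisfying l''(z*) > 0 and α_l(z*) = 3(l'''(z*))² − l''''(z*)·l''(z*) > 0. Then there exist σ > 0 and a twice continuously differentiable function Ẑ : (z* − σ, z* + σ) → ℝ such that Ẑ(z*) = 2/l''(z*), for all z in the interval l'(z) + l'(z − Ẑ(z)·l'(z)) = 0, and the derivatives at z* satisfy Ẑ'(z*) = 0 and Ẑ''(z*) = 2·α_l(z*)/(3·(l''(z*))³). -/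
/-!
Write `g = l'`, so `g zs = 0` and `a = g' zs > 0`. By the inverse function theorem `g` has a
`C⁴` local inverse, and `w z = g⁻¹ (-g z)` is a `C⁴` map near `zs` fixing `zs` with
`g (w z) = -g z`. The required identity holds as soon as `Z z * g z = z - w z`. Both sides vanish
at `zs`, so Hadamard's lemma (`exists_hadamard_factor`) gives `g z = (z - zs) * h z` and
`z - w z = (z - zs) * k z` with `h` and `k` of class `C³` and `h zs = a ≠ 0`; hence `Z = k / h`
is of class `C³` near `zs`.

The derivatives of `w` at `zs` come from differentiating `g (w z) = -g z` three times: with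
`b = g'' zs` they are `-1`, `-2b/a` and `-6b²/a²`. Differentiating `Z * g = id - w` three times
with the Leibniz rule, where `g zs = 0` removes the top-order term, then determines
`Z zs`, `Z' zs` and `Z'' zs` in turn.
-/

open Filter Topology

/-- Differentiation under the integral sign for the weighted averages of `f` along the segment
from `x` to `z`. The weight `c` is arbitrary because each derivative in `z` multiplies it by `t`,
which is what makes the induction on `n` go through. -/
lemma contDiff_segment_average (x : ℝ) (n : ℕ) (f c : ℝ → ℝ) (hf : ContDiff ℝ n f)
    (hc : Continuous c) :
    ContDiff ℝ n (fun z => ∫ t in (0 : ℝ)..1, c t * f (x + t * (z - x))) := by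
  induction n generalizing f c with
  | zero =>
    have hf' : Continuous f := hf.continuous
    refine contDiff_zero.2 ?_
    apply intervalIntegral.continuous_parametric_intervalIntegral_of_continuous'
    simp only [Function.uncurry_def]
    fun_prop
  | succ n ih =>
    have hf0 : Continuous f := hf.continuous
    rw [Nat.cast_succ, contDiff_succ_iff_deriv] at hf
    obtain ⟨hd, -, hf'⟩ := hf
    have hf'c : Continuous (deriv f) := hf'.continuous
    have key : ∀ z, HasDerivAt (fun z => ∫ t in (0 : ℝ)..1, c t * f (x + t * (z - x)))
        (∫ t in (0 : ℝ)..1, (c t * t) * deriv f (x + t * (z - x))) z := by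
      intro z
      have hcont : Continuous
          (fun p : ℝ × ℝ => (c p.2 * p.2) * deriv f (x + p.2 * (p.1 - x))) := by fun_prop
      obtain ⟨C, hC⟩ := ((isCompact_closedBall z 1).prod
        (isCompact_Icc (a := (0 : ℝ)) (b := 1))).exists_bound_of_continuousOn hcont.continuousOn
      refine (intervalIntegral.hasDerivAt_integral_of_dominated_loc_of_deriv_le
        (F := fun z t => c t * f (x + t * (z - x)))
        (F' := fun z t => (c t * t) * deriv f (x + t * (z - x)))
        (bound := fun _ => C) (Metric.closedBall_mem_nhds z one_pos) ?_ ?_ ?_ ?_ ?_ ?_).2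
      · exact Eventually.of_forall fun y => Continuous.aestronglyMeasurable (by fun_prop)
      · exact Continuous.intervalIntegrable (by fun_prop) _ _
      · exact Continuous.aestronglyMeasurable (by fun_prop)
      · refine Eventually.of_forall fun t ht y hy => hC (y, t) ⟨hy, ?_⟩
        rw [Set.uIoc_of_le zero_le_one] at ht
        exact ⟨ht.1.le, ht.2⟩
      · exact intervalIntegrable_const
      · refine Eventually.of_forall fun t _ y _ => ?_
        have h1 : HasDerivAt (fun y => x + t * (y - x)) t y := by
          simpa using (((hasDerivAt_id y).sub_const x).const_mul t).const_add x
        have h2 := ((hd (x + t * (y - x))).hasDerivAt.comp y h1).const_mul (c t)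
        exact h2.congr_deriv (by ring)
    rw [Nat.cast_succ, contDiff_succ_iff_deriv]
    refine ⟨fun z => (key z).differentiableAt, by simp, ?_⟩
    rw [funext fun z => (key z).deriv]
    exact ih (deriv f) (fun t => c t * t) hf' (by fun_prop)

/-- Hadamard's lemma in one variable: a function of class `C^(n+1)` at one of its zeros `x` is,
near `x`, the product of `z - x` and a function of class `C^n`. -/
lemma exists_hadamard_factor (f : ℝ → ℝ) (x : ℝ) (n : ℕ) (hf : ContDiffAt ℝ (n + 1 : ℕ) f x)
    (hfx : f x = 0) :
    ∃ q : ℝ → ℝ, ContDiffAt ℝ n q x ∧ q x = deriv f x ∧ ∀ᶠ z in 𝓝 x, f z = (z - x) * q z := by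
  -- A cutoff makes `f` smooth on the whole line without changing it near `x`.
  obtain ⟨F, hF, hFf⟩ : ∃ F : ℝ → ℝ, ContDiff ℝ (n + 1 : ℕ) F ∧ F =ᶠ[𝓝 x] f := by
    obtain ⟨r, hr, hball⟩ := Metric.eventually_nhds_iff_ball.1 (hf.eventually (by simp))
    let χ : ContDiffBump x := ⟨r / 4, r / 2, by positivity, by linarith⟩
    refine ⟨fun z => χ z * f z, contDiff_iff_contDiffAt.2 fun z => ?_, ?_⟩
    · by_cases hz : z ∈ tsupport χ
      · rw [χ.tsupport_eq] at hz
        exact χ.contDiffAt.mul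
          (hball z (Metric.closedBall_subset_ball (by change r / 2 < r; linarith) hz))
      · refine (contDiffAt_const (c := (0 : ℝ))).congr_of_eventuallyEq ?_
        filter_upwards [notMem_tsupport_iff_eventuallyEq.1 hz] with y hy
        simp [hy]
    · filter_upwards [χ.eventuallyEq_one] with y hy
      simp [hy]
  have hF0 : F x = 0 := hFf.eq_of_nhds.trans hfx
  have hF' := hF
  rw [Nat.cast_succ, contDiff_succ_iff_deriv] at hF'
  obtain ⟨hd, -, hdF⟩ := hF'
  have hdc : Continuous (deriv F) := hdF.continuous
  refine ⟨fun z => ∫ t in (0 : ℝ)..1, 1 * deriv F (x + t * (z - x)),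
    (contDiff_segment_average x n (deriv F) (fun _ => 1) hdF continuous_const).contDiffAt,
    by simp [hFf.deriv_eq], ?_⟩
  filter_upwards [hFf] with z hz
  have hderiv : ∀ t ∈ Set.uIcc (0 : ℝ) 1, HasDerivAt (fun t => F (x + t * (z - x)))
      ((z - x) * (1 * deriv F (x + t * (z - x)))) t := by
    intro t _
    have h1 : HasDerivAt (fun t => x + t * (z - x)) (z - x) t := by
      simpa using ((hasDerivAt_id t).mul_const (z - x)).const_add x
    exact ((hd (x + t * (z - x))).hasDerivAt.comp t h1).congr_deriv (by ring)
  have hftc := intervalIntegral.integral_eq_sub_of_hasDerivAt hderiv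
    (Continuous.intervalIntegrable (by fun_prop) _ _)
  rw [intervalIntegral.integral_const_mul] at hftc
  rw [hftc]
  simp [hF0, hz]

theorem inverse_bifurcation_map
    (l : ℝ → ℝ) (zs : ℝ)
    (hl : ContDiff ℝ 5 l) (hmin : IsLocalMin l zs)
    (hl2 : 0 < iteratedDeriv 2 l zs)
    (hps : 0 < 3 * (iteratedDeriv 3 l zs) ^ 2 -
        iteratedDeriv 4 l zs * iteratedDeriv 2 l zs) :
    ∃ σ > (0 : ℝ), ∃ Z : ℝ → ℝ,
      ContDiffOn ℝ 2 Z (Set.Ioo (zs - σ) (zs + σ)) ∧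
      Z zs = 2 / iteratedDeriv 2 l zs ∧
      (∀ z ∈ Set.Ioo (zs - σ) (zs + σ),
        deriv l z + deriv l (z - Z z * deriv l z) = 0) ∧
      deriv Z zs = 0 ∧
      deriv (deriv Z) zs =
        2 * (3 * (iteratedDeriv 3 l zs) ^ 2 -
              iteratedDeriv 4 l zs * iteratedDeriv 2 l zs) /
          (3 * (iteratedDeriv 2 l zs) ^ 3) := by
  have hg0 : deriv l zs = 0 := hmin.deriv_eq_zero
  have hg : ContDiff ℝ 4 (deriv l) := (contDiff_succ_iff_deriv (n := 4)).1 hl |>.2.2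
  have e4 : iteratedDeriv 4 l zs = iteratedDeriv 3 (deriv l) zs := by rw [iteratedDeriv_succ']
  have e3 : iteratedDeriv 3 l zs = iteratedDeriv 2 (deriv l) zs := by rw [iteratedDeriv_succ']
  have e2 : iteratedDeriv 2 l zs = deriv (deriv l) zs := by
    rw [iteratedDeriv_succ', iteratedDeriv_one]
  rw [e2] at hl2
  rw [e4, e3, e2]
  generalize deriv l = g at *
  clear hps hmin e4 e3 e2 hl
  have ha : deriv g zs ≠ 0 := hl2.ne'
  have hgat : ContDiffAt ℝ 4 g zs := hg.contDiffAt
  obtain ⟨w, hw, hwz, hgw⟩ : ∃ w : ℝ → ℝ, ContDiffAt ℝ 4 w zs ∧ w zs = zs ∧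
      ∀ᶠ z in 𝓝 zs, g (w z) = -g z := by
    have hd : HasFDerivAt g
        ((ContinuousLinearEquiv.unitsEquivAut ℝ (Units.mk0 _ ha) : ℝ ≃L[ℝ] ℝ) : ℝ →L[ℝ] ℝ) zs :=
      ((hgat.differentiableAt (by norm_num)).hasDerivAt).hasFDerivAt_equiv ha
    have h4 : (4 : WithTop ℕ∞) ≠ 0 := by norm_num
    have hn0 : -g zs = g zs := by simp [hg0]
    refine ⟨fun z => hgat.localInverse hd h4 (-g z), ?_, ?_, ?_⟩
    · have h1 := hgat.to_localInverse hd h4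
      rw [← hn0] at h1
      exact h1.comp zs hgat.neg
    · simp only [hn0]
      exact hgat.localInverse_apply_image hd h4
    · have h1 := (hgat.hasStrictFDerivAt' hd h4).eventually_right_inverse
      have h2 : Tendsto (fun z => -g z) (𝓝 zs) (𝓝 (g zs)) := by
        have := hgat.neg.continuousAt.tendsto
        rwa [hn0] at this
      exact h2.eventually h1
  have hwd : DifferentiableAt ℝ w zs := hw.differentiableAt (by norm_num)
  have hgd : DifferentiableAt ℝ g zs := hgat.differentiableAt (by norm_num)
  have hcomp : g ∘ w =ᶠ[𝓝 zs] fun z => -g z := hgw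
  have w1 : deriv w zs = -1 := by
    have h := hcomp.deriv_eq
    rw [deriv_comp zs (by rwa [hwz]) hwd, deriv.fun_neg, hwz] at h
    apply mul_left_cancel₀ ha
    linarith
  have w2 : deriv g zs * iteratedDeriv 2 w zs = -2 * iteratedDeriv 2 g zs := by
    have h := hcomp.iteratedDeriv_eq 2
    rw [iteratedDeriv_comp_two (by rw [hwz]; exact hgat.of_le (by norm_num))
      (hw.of_le (by norm_num)), iteratedDeriv_fun_neg, hwz, w1] at h
    linarith
  have w3 : deriv g zs * iteratedDeriv 3 w zs =
      3 * iteratedDeriv 2 g zs * iteratedDeriv 2 w zs := by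
    have h := hcomp.iteratedDeriv_eq 3
    rw [iteratedDeriv_comp_three (by rw [hwz]; exact hgat.of_le (by norm_num))
      (hw.of_le (by norm_num)), iteratedDeriv_fun_neg, hwz, w1] at h
    linarith
  obtain ⟨h, hh, hh0, hgh⟩ := exists_hadamard_factor g zs 3 hgat hg0
  obtain ⟨k, hk, -, hwk⟩ := exists_hadamard_factor (fun z => z - w z) zs 3
    (contDiffAt_id.sub hw) (by simp [hwz])
  set Z : ℝ → ℝ := fun z => k z / h z with hZdef
  have hZ : ContDiffAt ℝ 3 Z zs := hk.div hh (by rwa [hh0])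
  have hZg : ∀ᶠ z in 𝓝 zs, Z z * g z = z - w z := by
    have hne : ∀ᶠ z in 𝓝 zs, h z ≠ 0 :=
      hh.continuousAt.eventually_ne (by rwa [hh0])
    filter_upwards [hgh, hwk, hne] with z h1 h2 h3
    rw [h1, h2, hZdef]
    field_simp
  clear_value Z
  have hprod : w =ᶠ[𝓝 zs] fun z => z - (Z * g) z := by
    filter_upwards [hZg] with z hz
    simp [hz]
  -- `Z` is only `C³`, which is still enough for the third derivative of `Z * g`.
  have L : ∀ n : ℕ, n ≤ 3 → iteratedDeriv n w zs = iteratedDeriv n (fun z : ℝ => z) zs -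
      ∑ i ∈ Finset.range (n + 1),
        n.choose i * iteratedDeriv i Z zs * iteratedDeriv (n - i) g zs := by
    intro n hn
    have hn' : (n : WithTop ℕ∞) ≤ 3 := by exact_mod_cast hn
    have hZn : ContDiffAt ℝ n Z zs := hZ.of_le hn'
    have hgn : ContDiffAt ℝ n g zs := hgat.of_le (hn'.trans (by norm_num))
    rw [hprod.iteratedDeriv_eq n, iteratedDeriv_fun_sub (f := fun z : ℝ => z) (g := Z * g) contDiffAt_id (hZn.mul hgn),
      iteratedDeriv_mul hZn hgn]
  have L1 := L 1 (by norm_num)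
  have L2 := L 2 (by norm_num)
  have L3 := L 3 (by norm_num)
  have i2 : iteratedDeriv 2 (fun z : ℝ => z) zs = 0 := by
    simp [iteratedDeriv_succ]
  have i3 : iteratedDeriv 3 (fun z : ℝ => z) zs = 0 := by
    simp [iteratedDeriv_succ]
  -- The Leibniz sums for orders 1, 2, 3; the term `i = n` vanishes because `g zs = 0`.
  simp [Finset.sum_range_succ, hg0, w1, i2, i3] at L1 L2 L3
  have hZ0 : Z zs = 2 / deriv g zs := by
    rw [eq_div_iff ha]
    linarith
  have hZ1 : deriv Z zs = 0 := by
    have : deriv g zs ^ 2 * deriv Z zs = 0 := by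
      linear_combination (deriv g zs / 2) * L2 - (1 / 2) * w2 - (iteratedDeriv 2 g zs / 2) * L1
    exact (mul_eq_zero.1 this).resolve_left (pow_ne_zero 2 ha)
  have hZ2 : deriv (deriv Z) zs =
      2 * (3 * (iteratedDeriv 2 g zs) ^ 2 - iteratedDeriv 3 g zs * deriv g zs) /
        (3 * (deriv g zs) ^ 3) := by
    have hdd : deriv (deriv Z) zs = iteratedDeriv 2 Z zs := by
      rw [iteratedDeriv_succ', iteratedDeriv_one]
    rw [hdd, eq_div_iff (mul_ne_zero three_ne_zero (pow_ne_zero 3 ha))]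
    rw [hZ1] at L3
    linear_combination deriv g zs ^ 2 * L3 - deriv g zs * w3 -
      3 * iteratedDeriv 2 g zs * w2 - deriv g zs * iteratedDeriv 3 g zs * L1
  have hev : ∀ᶠ z in 𝓝 zs, ContDiffAt ℝ 2 Z z ∧ g z + g (z - Z z * g z) = 0 := by
    filter_upwards [(hZ.of_le (by norm_num : (2 : WithTop ℕ∞) ≤ 3)).eventually (by simp), hZg, hgw]
      with z h1 h2 h3
    exact ⟨h1, by rw [h2, sub_sub_cancel, h3, add_neg_cancel]⟩
  obtain ⟨σ, hσ, hball⟩ := Metric.eventually_nhds_iff_ball.1 hev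
  rw [Real.ball_eq_Ioo] at hball
  exact ⟨σ, hσ, Z, fun z hz => (hball z hz).1.contDiffWithinAt, hZ0,
    fun z hz => (hball z hz).2, hZ1, hZ2⟩
end
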